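/- Let A be a commutative ℚ-algebra and u : ι → ι → A satisfy u a b = -u b a, (u a b)² = 0, and the Arnold relation. With Δ a b c := u a b + u b c + u c a, the octahedral move holds: Δ 1 2 3 * Δ 3 4 5 * Δ 5 6 1 * Δ 6 4 2 = Δ 2 3 4 * Δ 4 5 6 * Δ 6 1 2 * Δ 1 5 3 for any six distinct indices. -/

import Mathlib

/-!
If `x`, `y`, `z` square to zero and satisfy the Arnold relation `x * y + y * z + z * x = 0`, then
`x * y * z = 0` as well, so `(1 + x T) (1 + y T) (1 + z T) = 1 + (x + y + z) T`. A product of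
factors `1 + Δ T` over `n` triangles is therefore the product of `1 + u_e T` over all their edges,
and its `T ^ n` coefficient `∏ Δ` depends only on the multiset of oriented edges. The octahedral
move exchanges the two classes of faces in a checkerboard colouring of the octahedron; each class
contains every one of the twelve edges exactly once, with the same orientation.
-/

open Polynomial

section ArnoldRelation

variable {R : Type*} [CommSemiring R] {x y z : R}

theorem mul_mul_eq_zero_of_arnold (hx : x ^ 2 = 0) (h : x * y + y * z + z * x = 0) :
    x * y * z = 0 :=
  calc
    x * y * z = x ^ 2 * (y + z) + x * y * z := by rw [hx, zero_mul, zero_add]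
    _ = x * (x * y + y * z + z * x) := by ring
    _ = 0 := by rw [h, mul_zero]

theorem one_add_mul_mul_mul_of_arnold (hx : x ^ 2 = 0) (h : x * y + y * z + z * x = 0) (t : R) :
    (1 + x * t) * (1 + y * t) * (1 + z * t) = 1 + (x + y + z) * t :=
  calc
    (1 + x * t) * (1 + y * t) * (1 + z * t) =
        1 + (x + y + z) * t + (x * y + y * z + z * x) * t ^ 2 + x * y * z * t ^ 3 := by ring
    _ = 1 + (x + y + z) * t := by
      rw [h, mul_mul_eq_zero_of_arnold hx h, zero_mul, zero_mul, add_zero, add_zero]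

end ArnoldRelation

theorem coeff_card_prod_one_add_C_mul_X {R : Type*} [CommSemiring R] (s : Multiset R) :
    (s.map fun a ↦ 1 + C a * X).prod.coeff s.card = s.prod := by
  have natDegree_le : ∀ p ∈ s.map fun a ↦ 1 + C a * X, p.natDegree ≤ 1 := by
    intro p hp
    obtain ⟨a, -, rfl⟩ := Multiset.mem_map.mp hp
    compute_degree
  simpa [coeff_one] using coeff_multiset_prod_of_natDegree_le _ 1 natDegree_le

section Triangles

variable {A ι : Type*}

/-- The oriented edges of the triangle `(a, b, c)`, traversed cyclically. -/
def triangleEdges : ι × ι × ι → Multiset (ι × ι)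
  | (a, b, c) => {(a, b), (b, c), (c, a)}

/-- The triangle element `Δ_{abc}`: the sum of the edge variables `u` along the oriented boundary of
the triangle `(a, b, c)`. -/
def triangleSum [Add A] (u : ι → ι → A) : ι × ι × ι → A
  | (a, b, c) => u a b + u b c + u c a

theorem card_bind_triangleEdges (s : Multiset (ι × ι × ι)) :
    (s.bind triangleEdges).card = s.card * 3 := by
  simp [Multiset.card_bind, triangleEdges]

theorem bind_triangleEdges_octahedron (i₁ i₂ i₃ i₄ i₅ i₆ : ι) :
    Multiset.bind {(i₁, i₂, i₃), (i₃, i₄, i₅), (i₅, i₆, i₁), (i₆, i₄, i₂)} triangleEdges =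
      Multiset.bind {(i₂, i₃, i₄), (i₄, i₅, i₆), (i₆, i₁, i₂), (i₁, i₅, i₃)} triangleEdges := by
  simp only [Multiset.insert_eq_cons, Multiset.cons_bind, Multiset.singleton_bind, triangleEdges]
  simp only [← Multiset.singleton_add]
  abel

variable [CommSemiring A] (u : ι → ι → A) (hsq : ∀ a b, u a b ^ 2 = 0)
  (harnold : ∀ a b c, u a b * u b c + u b c * u c a + u c a * u a b = 0)

include hsq harnold

theorem prod_one_add_triangleEdges (t : ι × ι × ι) :
    ((triangleEdges t).map fun e : ι × ι ↦ 1 + C (u e.1 e.2) * X).prod =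
      1 + C (triangleSum u t) * X := by
  obtain ⟨a, b, c⟩ := t
  have sq_C : C (u a b) ^ 2 = 0 := by rw [← C_pow, hsq, C_0]
  have arnold_C :
      C (u a b) * C (u b c) + C (u b c) * C (u c a) + C (u c a) * C (u a b) = 0 := by
    simp only [← C_mul, ← C_add, harnold, C_0]
  simpa [triangleEdges, triangleSum, mul_assoc] using
    one_add_mul_mul_mul_of_arnold sq_C arnold_C X

theorem prod_one_add_triangleSum (s : Multiset (ι × ι × ι)) :
    (s.map fun t ↦ 1 + C (triangleSum u t) * X).prod =
      ((s.bind triangleEdges).map fun e : ι × ι ↦ 1 + C (u e.1 e.2) * X).prod := by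
  simp only [Multiset.map_bind, Multiset.prod_bind, prod_one_add_triangleEdges u hsq harnold]

theorem prod_triangleSum_eq_of_bind_triangleEdges_eq {s t : Multiset (ι × ι × ι)}
    (h : s.bind triangleEdges = t.bind triangleEdges) :
    (s.map (triangleSum u)).prod = (t.map (triangleSum u)).prod := by
  have card_eq : s.card = t.card := by
    have card_edges_eq := congrArg Multiset.card h
    rw [card_bind_triangleEdges, card_bind_triangleEdges] at card_edges_eq
    lia
  have prod_eq_coeff (r : Multiset (ι × ι × ι)) : (r.map (triangleSum u)).prod =
      ((r.bind triangleEdges).map fun e : ι × ι ↦ 1 + C (u e.1 e.2) * X).prod.coeff r.card := by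
    simpa [Function.comp_def, prod_one_add_triangleSum u hsq harnold] using
      (coeff_card_prod_one_add_C_mul_X (r.map (triangleSum u))).symm
  rw [prod_eq_coeff, prod_eq_coeff, h, card_eq]

theorem octahedral_move_general (i₁ i₂ i₃ i₄ i₅ i₆ : ι) :
    triangleSum u (i₁, i₂, i₃) * triangleSum u (i₃, i₄, i₅)
        * triangleSum u (i₅, i₆, i₁) * triangleSum u (i₆, i₄, i₂)
      = triangleSum u (i₂, i₃, i₄) * triangleSum u (i₄, i₅, i₆)
        * triangleSum u (i₆, i₁, i₂) * triangleSum u (i₁, i₅, i₃) := by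
  simpa [mul_assoc] using prod_triangleSum_eq_of_bind_triangleEdges_eq u hsq harnold
    (bind_triangleEdges_octahedron i₁ i₂ i₃ i₄ i₅ i₆)

end Triangles

theorem octahedral_move
    {A ι : Type*} [CommRing A] [Algebra ℚ A] (u : ι → ι → A)
    (hanti : ∀ a b, u a b = - u b a)
    (hsq : ∀ a b, (u a b) ^ 2 = 0)
    (harnold : ∀ a b c, u a b * u b c + u b c * u c a + u c a * u a b = 0)
    (i₁ i₂ i₃ i₄ i₅ i₆ : ι)
    (hdist : [i₁, i₂, i₃, i₄, i₅, i₆].Pairwise (· ≠ ·)) :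
    (u i₁ i₂ + u i₂ i₃ + u i₃ i₁) * (u i₃ i₄ + u i₄ i₅ + u i₅ i₃)
        * (u i₅ i₆ + u i₆ i₁ + u i₁ i₅) * (u i₆ i₄ + u i₄ i₂ + u i₂ i₆)
      = (u i₂ i₃ + u i₃ i₄ + u i₄ i₂) * (u i₄ i₅ + u i₅ i₆ + u i₆ i₄)
        * (u i₆ i₁ + u i₁ i₂ + u i₂ i₆) * (u i₁ i₅ + u i₅ i₃ + u i₃ i₁) :=
  octahedral_move_general u hsq harnold i₁ i₂ i₃ i₄ i₅ i₆
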